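/- Assume in addition 1 − 4a − 2b + 3a² − 6ab > 0, let ε satisfy 0 < ε < (1−3a−2b)/(4a) − c, and put T = [−1 + c + ε, 1 − c − ε]. Then there exists n ∈ ℕ such that m_T^{(n)}(x, y) > 0 for all x, y ∈ T. -/

import Mathlib

open MeasureTheory

/-- The triangular density: `f_t(z) = (t − |z|)/t²` for `|z| ≤ t` and `0` otherwise. -/
noncomputable def triangularDensity (t z : ℝ) : ℝ :=
  if |z| ≤ t then (t - |z|) / t ^ 2 else 0

/-- The kernel `m_T(x,y)` of the branching process, with `t = (1−3a−2b)/2`: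
`m_T(x,y) = [a f_t(ay + 1/2 + a/2 − b − x) + 2a f_t(ay − x) + a f_t(ay − 1/2 − a/2 + b − x)]·1_T(y)`. -/
noncomputable def larssonKernel (a b : ℝ) (T : Set ℝ) (x y : ℝ) : ℝ :=
  (a * triangularDensity ((1 - 3 * a - 2 * b) / 2) (a * y + 1 / 2 + a / 2 - b - x) +
      2 * a * triangularDensity ((1 - 3 * a - 2 * b) / 2) (a * y - x) +
      a * triangularDensity ((1 - 3 * a - 2 * b) / 2) (a * y - 1 / 2 - a / 2 + b - x)) *
    Set.indicator T (fun _ => (1 : ℝ)) y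

/-- The iterated kernels, with the index shifted by one:
`larssonKernelIter a b T n = m_T^{(n+1)}`, i.e. `larssonKernelIter a b T 0 = m_T^{(1)} = m_T`
and `m_T^{(n+1)}(x,y) = ∫_T m_T^{(n)}(x,z) m_T(z,y) dz`. -/
noncomputable def larssonKernelIter (a b : ℝ) (T : Set ℝ) : ℕ → ℝ → ℝ → ℝ
  | 0 => larssonKernel a b T
  | (n + 1) => fun x y => ∫ z in T, larssonKernelIter a b T n x z * larssonKernel a b T z y

/-!
From a point `x` the kernel reaches three open intervals of length `2t / a`, centred at `x / a` and
`(x ± σ) / a`, where `t = (1 - 3a - 2b) / 2` and `σ = 1/2 + a/2 - b`. So from an interval `[l, u]`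
it reaches three translates of one interval, of length `(u - l + 2t) / a ≥ 2 (u - l) + 2t / a`, and
one of them always meets `T = [-R, R]` in an interval longer than `[l, u]` by a fixed amount, until
all of `T` is reached:

* a middle translate inside `T` has been stretched by the factor `1 / a`;
* if the middle translate leaves `T` on the right, say, then it and the left translate together
  miss at most a gap of `T`, and `R > 1 - t / (2a)` makes one of the two long enough. The left
  translate sticks out far enough to the left because `1 - c > R` is the repelling fixed point of
  the outer branch.

Since the kernel is continuous, positivity of the iterates propagates along these intervals.
-/

open Set

section TriangularDensity

variable {t z : ℝ}

lemma triangularDensity_eq_max (t z : ℝ) :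
    triangularDensity t z = max 0 (t - |z|) / t ^ 2 := by
  unfold triangularDensity
  split_ifs with h
  · rw [max_eq_right (sub_nonneg.2 h)]
  · rw [max_eq_left (sub_nonpos.2 (not_le.1 h).le), zero_div]

lemma triangularDensity_nonneg (t z : ℝ) : 0 ≤ triangularDensity t z := by
  rw [triangularDensity_eq_max]
  positivity

lemma triangularDensity_pos (h : |z| < t) : 0 < triangularDensity t z := by
  have ht : 0 < t := (abs_nonneg z).trans_lt h
  rw [triangularDensity, if_pos h.le]
  exact div_pos (sub_pos.2 h) (pow_pos ht 2)

@[fun_prop]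
lemma continuous_triangularDensity (t : ℝ) : Continuous (triangularDensity t) := by
  rw [funext (triangularDensity_eq_max t)]
  fun_prop

end TriangularDensity

section Kernel

variable {a b s x y : ℝ} {T : Set ℝ}

/-- The half-width `t` of the triangular densities in `larssonKernel a b`. -/
noncomputable def larssonWidth (a b : ℝ) : ℝ := (1 - 3 * a - 2 * b) / 2

/-- The distance between neighbouring branches of `larssonKernel a b`: as functions of `x`, they are
centred at `a * y` and `a * y ± larssonShift a b`. -/
noncomputable def larssonShift (a b : ℝ) : ℝ := 1 / 2 + a / 2 - b

lemma larssonKernel_of_mem (hy : y ∈ T) :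
    larssonKernel a b T x y = larssonKernel a b univ x y := by
  simp [larssonKernel, hy]

lemma larssonKernel_eq_branches (a b : ℝ) (T : Set ℝ) (x y : ℝ) :
    larssonKernel a b T x y =
      (a * triangularDensity (larssonWidth a b) (a * y + larssonShift a b - x) +
        2 * a * triangularDensity (larssonWidth a b) (a * y - x) +
        a * triangularDensity (larssonWidth a b) (a * y - larssonShift a b - x)) *
      T.indicator (fun _ => 1) y := by
  unfold larssonKernel larssonWidth larssonShift
  ring_nf

lemma larssonKernel_nonneg (ha : 0 ≤ a) (b : ℝ) (T : Set ℝ) (x y : ℝ) :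
    0 ≤ larssonKernel a b T x y := by
  have hf := triangularDensity_nonneg (larssonWidth a b)
  rw [larssonKernel_eq_branches]
  refine mul_nonneg (add_nonneg (add_nonneg ?_ ?_) ?_) (indicator_nonneg (by simp) y)
  exacts [mul_nonneg ha (hf _), mul_nonneg (by positivity) (hf _), mul_nonneg ha (hf _)]

lemma larssonKernel_pos (ha : 0 < a) (hy : y ∈ T)
    (hs : s ∈ ({0, larssonShift a b, -larssonShift a b} : Set ℝ))
    (h : |a * y + s - x| < larssonWidth a b) : 0 < larssonKernel a b T x y := by
  have hf := triangularDensity_nonneg (larssonWidth a b)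
  have hleft := hf (a * y + larssonShift a b - x)
  have hmid := hf (a * y - x)
  have hright := hf (a * y - larssonShift a b - x)
  have hpos := triangularDensity_pos h
  rw [larssonKernel_eq_branches, indicator_of_mem hy, mul_one]
  simp only [mem_insert_iff, mem_singleton_iff] at hs
  rcases hs with rfl | rfl | rfl
  · rw [add_zero] at hpos
    positivity
  · positivity
  · rw [← sub_eq_add_neg] at hpos
    positivity

@[fun_prop]
lemma continuous_larssonKernel_univ {X : Type*} [TopologicalSpace X] {f g : X → ℝ} (a b : ℝ)
    (hf : Continuous f) (hg : Continuous g) :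
    Continuous fun v => larssonKernel a b univ (f v) (g v) := by
  simp only [larssonKernel, indicator_univ]
  fun_prop

end Kernel

section Iterates

variable {a b x y w : ℝ} {T : Set ℝ}

lemma larssonKernelIter_nonneg (ha : 0 ≤ a) (b : ℝ) (T : Set ℝ) (n : ℕ) (x y : ℝ) :
    0 ≤ larssonKernelIter a b T n x y := by
  induction n generalizing y with
  | zero => exact larssonKernel_nonneg ha b T x y
  | succ n ih =>
    exact integral_nonneg fun z => mul_nonneg (ih z) (larssonKernel_nonneg ha b T z y)

lemma exists_continuous_eqOn_larssonKernelIter (a b : ℝ) (hT : IsCompact T) (n : ℕ) (x : ℝ) :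
    ∃ g : ℝ → ℝ, Continuous g ∧ EqOn (larssonKernelIter a b T n x) g T := by
  induction n with
  | zero =>
    exact ⟨larssonKernel a b univ x, by fun_prop, fun y hy => larssonKernel_of_mem hy⟩
  | succ n ih =>
    obtain ⟨g, hg, hgT⟩ := ih
    have hcont : Continuous fun v : ℝ × ℝ => g v.2 * larssonKernel a b univ v.2 v.1 := by
      fun_prop
    refine ⟨fun y => ∫ z in T, g z * larssonKernel a b univ z y,
      continuous_parametric_integral_of_continuous hcont hT,
      fun y hy => setIntegral_congr_fun hT.measurableSet fun z hz => ?_⟩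
    simp only [hgT hz, larssonKernel_of_mem hy]

lemma larssonKernelIter_succ_pos {p q : ℝ} {n : ℕ} (ha : 0 ≤ a) (hpq : p < q)
    (hw : w ∈ Icc p q) (hy : y ∈ Icc p q) (hxw : 0 < larssonKernelIter a b (Icc p q) n x w)
    (hwy : 0 < larssonKernel a b univ w y) :
    0 < larssonKernelIter a b (Icc p q) (n + 1) x y := by
  obtain ⟨g, hg, hgT⟩ := exists_continuous_eqOn_larssonKernelIter a b isCompact_Icc n x
  have hcont : ContinuousOn (fun z => larssonKernelIter a b (Icc p q) n x z *
      larssonKernel a b (Icc p q) z y) (Icc p q) := by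
    simp only [larssonKernel_of_mem hy]
    exact (hg.continuousOn.congr hgT).mul (by fun_prop)
  simp only [larssonKernelIter]
  rw [integral_Icc_eq_integral_Ioc, ← intervalIntegral.integral_of_le hpq.le]
  refine intervalIntegral.integral_pos hpq hcont (fun z _ => ?_) ⟨w, hw, ?_⟩
  · exact mul_nonneg (larssonKernelIter_nonneg ha b _ n x z) (larssonKernel_nonneg ha b _ z y)
  · exact mul_pos hxw (larssonKernel_of_mem hy ▸ hwy)

end Iterates

section Intervals

variable {S : Set ℝ} {R m p q δ : ℝ}

/-- `S` contains a closed subinterval of `[-R, R]` of length at least `m`, where a target length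
above `2 * R` is cut off at `2 * R` and so asks for all of `[-R, R]`. -/
def ContainsIntervalOfLength (S : Set ℝ) (R m : ℝ) : Prop :=
  ∃ l u, -R ≤ l ∧ u ≤ R ∧ min m (2 * R) ≤ u - l ∧ Icc l u ⊆ S

lemma ContainsIntervalOfLength.mono {m' : ℝ} {S' : Set ℝ} (h : ContainsIntervalOfLength S R m)
    (hm : min m' (2 * R) ≤ m) (hS : S ∩ Icc (-R) R ⊆ S') : ContainsIntervalOfLength S' R m' := by
  obtain ⟨l, u, hl, hu, hlen, hsub⟩ := h
  exact ⟨l, u, hl, hu, (le_min hm (min_le_right _ _)).trans hlen,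
    fun z hz => hS ⟨hsub hz, hl.trans hz.1, hz.2.trans hu⟩⟩

lemma ContainsIntervalOfLength.Icc_subset (h : ContainsIntervalOfLength S R m)
    (hm : 2 * R ≤ m) : Icc (-R) R ⊆ S := by
  obtain ⟨l, u, hl, hu, hlen, hsub⟩ := h
  rw [min_eq_right hm] at hlen
  exact (Icc_subset_Icc (by linarith) (by linarith)).trans hsub

lemma containsIntervalOfLength_of_Ioo_subset (hS : Ioo p q ⊆ S) (hpq : min m (2 * R) < q - p)
    (hp : min m (2 * R) < R - p) (hq : min m (2 * R) < q + R) :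
    ContainsIntervalOfLength S R m := by
  have hR := min_le_right m (2 * R)
  set μ := min m (2 * R) with hμ
  obtain ⟨p', hpp', hp'⟩ : ∃ p', p < p' ∧ p' < min ((p + q - μ) / 2) (R - μ) :=
    exists_between (lt_min (by linarith) (by linarith))
  obtain ⟨q', hq', hqq'⟩ : ∃ q', max ((p + q + μ) / 2) (μ - R) < q' ∧ q' < q :=
    exists_between (max_lt (by linarith) (by linarith))
  obtain ⟨hp'q, hp'R⟩ := lt_min_iff.1 hp'
  obtain ⟨hq'p, hq'R⟩ := max_lt_iff.1 hq'
  refine ⟨max (-R) p', min R q', le_max_left _ _, min_le_left _ _, ?_, fun z hz => hS ?_⟩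
  · rw [← hμ, le_sub_iff_add_le', ← le_sub_iff_add_le, max_le_iff]
    constructor <;> rw [le_sub_iff_add_le, le_min_iff] <;> constructor <;> linarith
  · exact ⟨hpp'.trans_le ((le_max_right _ _).trans hz.1),
      (hz.2.trans (min_le_right _ _)).trans_lt hqq'⟩

lemma containsIntervalOfLength_of_three_translates (hmid : Ioo p q ⊆ S)
    (hleft : Ioo (p - δ) (q - δ) ⊆ S) (hright : Ioo (p + δ) (q + δ) ⊆ S)
    (hlen : m < q - p) (hpδ : m < R - (p - δ)) (hqδ : m < q + δ + R)
    (hgap : 2 * m < 2 * R - δ + (q - p)) : ContainsIntervalOfLength S R m := by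
  have hm := min_le_left m (2 * R)
  have hR := min_le_right m (2 * R)
  rcases lt_or_ge R q with hq | hq
  · rcases lt_or_ge m (q - δ + R) with hlong | hshort
    · exact containsIntervalOfLength_of_Ioo_subset hleft
        (by linarith) (by linarith) (by linarith)
    · exact containsIntervalOfLength_of_Ioo_subset hmid
        (by linarith) (by linarith) (by linarith)
  rcases lt_or_ge p (-R) with hp | hp
  · rcases lt_or_ge m (R - (p + δ)) with hlong | hshort
    · exact containsIntervalOfLength_of_Ioo_subset hright
        (by linarith) (by linarith) (by linarith)
    · exact containsIntervalOfLength_of_Ioo_subset hmid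
        (by linarith) (by linarith) (by linarith)
  · exact containsIntervalOfLength_of_Ioo_subset hmid
      (by linarith) (by linarith) (by linarith)

end Intervals

section Reach

variable {a b l u s t z R κ : ℝ}

/-- The points to which `larssonKernel a b` assigns positive density from some point of `I`. The
restriction to `T` is left out: it only intersects the reach with `T`. -/
def larssonReach (a b : ℝ) (I : Set ℝ) : Set ℝ :=
  {y | ∃ w ∈ I, 0 < larssonKernel a b univ w y}

lemma exists_mem_Icc_abs_sub_lt (hlu : l ≤ u) (ht : 0 < t) (hl : l - t < z) (hu : z < u + t) :
    ∃ w ∈ Icc l u, |z - w| < t := by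
  rcases le_total z l with h | hlz
  · exact ⟨l, left_mem_Icc.2 hlu, abs_lt.2 ⟨by linarith, by linarith⟩⟩
  rcases le_total z u with hzu | h
  · exact ⟨z, ⟨hlz, hzu⟩, by simpa using ht⟩
  · exact ⟨u, right_mem_Icc.2 hlu, abs_lt.2 ⟨by linarith, by linarith⟩⟩

lemma Ioo_subset_larssonReach (ha : 0 < a) (ht : 0 < larssonWidth a b) (hlu : l ≤ u)
    (hs : s ∈ ({0, larssonShift a b, -larssonShift a b} : Set ℝ)) :
    Ioo ((l - larssonWidth a b) / a - s / a) ((u + larssonWidth a b) / a - s / a) ⊆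
      larssonReach a b (Icc l u) := by
  rintro y ⟨hly, hyu⟩
  rw [← sub_div, div_lt_iff₀' ha] at hly
  rw [← sub_div, lt_div_iff₀' ha] at hyu
  obtain ⟨w, hw, hyw⟩ :=
    exists_mem_Icc_abs_sub_lt (z := a * y + s) hlu ht (by linarith) (by linarith)
  exact ⟨w, hw, larssonKernel_pos ha (mem_univ y) hs hyw⟩

lemma larssonShift_div (ha : a ≠ 0) (b : ℝ) :
    larssonShift a b / a = 2 + larssonWidth a b / a := by
  unfold larssonShift larssonWidth
  field_simp
  ring

lemma outer_branch_fixed_point (ha : a ≠ 0) (ha' : a ≠ 1) (b : ℝ) :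
    (1 - 2 * b / (1 - a) - larssonWidth a b) / a - larssonShift a b / a =
      1 - 2 * b / (1 - a) := by
  have : 1 - a ≠ 0 := sub_ne_zero.2 ha'.symm
  unfold larssonShift larssonWidth
  field_simp
  ring

lemma exists_pos_containsIntervalOfLength_larssonReach (ha : 0 < a) (ha' : 2 * a ≤ 1)
    (ht : 0 < larssonWidth a b) (hR : R < 1 - 2 * b / (1 - a))
    (hR' : 1 - larssonWidth a b / a / 2 < R) :
    ∃ κ > 0, ∀ l u, -R ≤ l → l ≤ u → u ≤ R →
      ContainsIntervalOfLength (larssonReach a b (Icc l u)) R (u - l + κ) := by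
  have hfix := outer_branch_fixed_point ha.ne' (by linarith) b
  have hshift := larssonShift_div ha.ne' b
  have hτ : 0 < larssonWidth a b / a := div_pos ht ha
  have expand : ∀ v, 0 ≤ v → 2 * v ≤ v / a := fun v hv => by
    rw [le_div_iff₀ ha]
    nlinarith
  obtain ⟨κ, hκ, hκ_lt⟩ := exists_between (lt_min hτ (lt_min (sub_pos.2 hR) (sub_pos.2 hR')))
  obtain ⟨hκτ, hκR, hκR'⟩ := lt_min_iff.1 hκ_lt |>.imp_right lt_min_iff.1
  refine ⟨κ, hκ, fun l u hl hlu hu => ?_⟩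
  have hreach := fun s => Ioo_subset_larssonReach (s := s) ha ht hlu
  have expand_mid := expand (u - l) (by linarith)
  have expand_left := expand (1 - 2 * b / (1 - a) - l) (by linarith)
  have expand_right := expand (1 - 2 * b / (1 - a) + u) (by linarith)
  simp only [sub_div _ _ a, add_div _ _ a] at hfix hreach expand_mid expand_left expand_right
  set τ := larssonWidth a b / a
  set δ := larssonShift a b / a with hδ
  have hlen : u - l + κ < (u / a + τ) - (l / a - τ) := by linarith
  have hleft : u - l + κ < R - (l / a - τ - δ) := by linarith
  have hright : u - l + κ < u / a + τ + δ + R := by linarith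
  have hgap : 2 * (u - l + κ) < 2 * R - δ + ((u / a + τ) - (l / a - τ)) := by linarith
  refine containsIntervalOfLength_of_three_translates ?_ (hreach _ (by simp)) ?_
    hlen hleft hright hgap
  · simpa using hreach 0 (by simp)
  · simpa [neg_div, ← hδ] using hreach (-larssonShift a b) (by simp)

lemma containsIntervalOfLength_larssonKernelIter_pos (ha : 0 ≤ a) (hR : 0 < R) (hκ : 0 ≤ κ)
    (hgrow : ∀ l u, -R ≤ l → l ≤ u → u ≤ R →
      ContainsIntervalOfLength (larssonReach a b (Icc l u)) R (u - l + κ))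
    {x : ℝ} (hx : x ∈ Icc (-R) R) (n : ℕ) :
    ContainsIntervalOfLength {y | 0 < larssonKernelIter a b (Icc (-R) R) n x y} R (n * κ) := by
  induction n with
  | zero =>
    refine (hgrow x x hx.1 le_rfl hx.2).mono (by simp [hκ]) ?_
    rintro y ⟨⟨w, hw, hwy⟩, hy⟩
    rw [Icc_self, mem_singleton_iff] at hw
    exact (larssonKernel_of_mem hy).trans_gt (hw ▸ hwy)
  | succ n ih =>
    obtain ⟨l, u, hl, hu, hlen, hpos⟩ := ih
    have hlu : l ≤ u := sub_nonneg.1 (hlen.trans' (by positivity))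
    refine (hgrow l u hl hlu hu).mono ?_ ?_
    · rw [min_le_iff] at hlen ⊢
      push_cast
      exact hlen.imp (fun h => by linarith) (fun h => by linarith)
    · rintro y ⟨⟨w, hw, hwy⟩, hy⟩
      exact larssonKernelIter_succ_pos ha (by linarith) ⟨hl.trans hw.1, hw.2.trans hu⟩ hy
        (hpos hw) hwy

end Reach

theorem kernel_iterate_positive_simple_case_general
    {a b c ε : ℝ} {T : Set ℝ} (ha : 0 < a) (ha' : 2 * a ≤ 1) (hab : 3 * a + 2 * b < 1)
    (hc : c = 2 * b / (1 - a)) (hε : 0 < ε) (hε' : ε < (1 - 3 * a - 2 * b) / (4 * a) - c)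
    (hT : T = Icc (-1 + c + ε) (1 - c - ε)) :
    ∃ n : ℕ, ∀ x ∈ T, ∀ y ∈ T, 0 < larssonKernelIter a b T n x y := by
  obtain ⟨R, hR⟩ : ∃ R, R = 1 - c - ε := ⟨_, rfl⟩
  obtain rfl : T = Icc (-R) R := by rw [hT, hR]; ring_nf
  have ht : 0 < larssonWidth a b := by unfold larssonWidth; linarith
  rcases le_or_gt R 0 with hR0 | hR0
  · refine ⟨0, fun x hx y hy => larssonKernel_pos ha hy (mem_insert 0 _) ?_⟩
    obtain rfl : x = 0 := by linarith [hx.1, hx.2]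
    obtain rfl : y = 0 := by linarith [hy.1, hy.2]
    simpa using ht
  · have hτ : (1 - 3 * a - 2 * b) / (4 * a) = larssonWidth a b / a / 2 := by
      unfold larssonWidth; field_simp; ring
    obtain ⟨κ, hκ, hgrow⟩ := exists_pos_containsIntervalOfLength_larssonReach (R := R) ha ha' ht
      (by linarith) (by linarith)
    obtain ⟨n, hn⟩ := exists_nat_gt (2 * R / κ)
    refine ⟨n, fun x hx y hy => ?_⟩
    exact (containsIntervalOfLength_larssonKernelIter_pos ha.le hR0 hκ.le hgrow hx n).Icc_subset
      ((div_lt_iff₀ hκ).1 hn).le hy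

/-- In the simple case `1 − 4a − 2b + 3a² − 6ab > 0`, with `T = [−1 + c + ε, 1 − c − ε]`,
some iterate of the kernel is (strictly) positive everywhere on `T × T`.
(Recall `larssonKernelIter a b T n = m_T^{(n+1)}`.) -/
theorem kernel_iterate_positive_simple_case
    (a b : ℝ) (ha : 1 / 4 < a) (hb : 0 < b) (hab : 3 * a + 2 * b < 1)
    (c : ℝ) (hc : c = 2 * b / (1 - a))
    (hsimple : 0 < 1 - 4 * a - 2 * b + 3 * a ^ 2 - 6 * a * b)
    (ε : ℝ) (hε : 0 < ε) (hε' : ε < (1 - 3 * a - 2 * b) / (4 * a) - c)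
    (T : Set ℝ) (hT : T = Set.Icc (-1 + c + ε) (1 - c - ε)) :
    ∃ n : ℕ, ∀ x ∈ T, ∀ y ∈ T, 0 < larssonKernelIter a b T n x y :=
  kernel_iterate_positive_simple_case_general (by linarith) (by linarith) hab hc hε hε' hT
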